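/- Behaviour of subsolutions at the boundary: Let Ω ⊂ ℝⁿ be a bounded, open, uniformly convex domain, let f : Ω̄ × ℝ × ℝⁿ → ℝ be continuous and nonnegative, and let g : ∂Ω → ℝ be continuous. If v : Ω̄ → ℝ is an upper semicontinuous viscosity subsolution of the generalized Dirichlet problem for the Monge–Ampère equation, then v(x) ≤ g(x) for every x ∈ ∂Ω. -/

import Mathlib

/-!
Suppose `g x₀ < v x₀` at some `x₀ ∈ ∂Ω`, let `ν` be an outward unit normal to a supporting hyperplane
at `x₀`, and put `d x = -⟪ν, x - x₀⟫`. By uniform convexity `α ‖x - x₀‖² ≤ d x` on `closure Ω`.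
The function `φ = K d - d²` has Hessian `-2 ν νᵀ`, which is not positive semidefinite
(`normalTest_detPlus`), so the Monge–Ampère part of the operator is `1 + f ≥ 1 > 0` wherever `φ` is
used as a test function. Hence a maximum point `y` of `v - φ` over `closure Ω` lies on `∂Ω` and
satisfies `v y ≤ g y`. For large `K`, `φ` dominates a large multiple of `‖x - x₀‖²` on `closure Ω`,
so `y` is close to `x₀` and `v y ≥ v x₀`; by continuity of `g` this gives `g y < v x₀ ≤ v y`,
a contradiction.
-/


open scoped RealInnerProductSpace Classical

/-- `det⁺(X) = det X` if `X` is positive semidefinite, and `-1` otherwise. -/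
noncomputable def detPlus {n : ℕ} (X : Matrix (Fin n) (Fin n) ℝ) : ℝ :=
  if X.PosSemidef then X.det else -1

/-- The Hessian matrix of `φ : ℝⁿ → ℝ` at `x`, given by the second iterated derivative. -/
noncomputable def hessianMatrix {n : ℕ} (φ : EuclideanSpace ℝ (Fin n) → ℝ)
    (x : EuclideanSpace ℝ (Fin n)) : Matrix (Fin n) (Fin n) ℝ :=
  Matrix.of fun i j =>
    iteratedFDeriv ℝ 2 φ x ![EuclideanSpace.single i 1, EuclideanSpace.single j 1]

/-- Lower envelope `F_*` of the generalized Dirichlet Monge–Ampère operator. -/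
noncomputable def MALower {n : ℕ} (Ω : Set (EuclideanSpace ℝ (Fin n)))
    (f : EuclideanSpace ℝ (Fin n) → ℝ → EuclideanSpace ℝ (Fin n) → ℝ)
    (g : EuclideanSpace ℝ (Fin n) → ℝ)
    (x : EuclideanSpace ℝ (Fin n)) (u : ℝ) (p : EuclideanSpace ℝ (Fin n))
    (X : Matrix (Fin n) (Fin n) ℝ) : ℝ :=
  if x ∈ Ω then -detPlus X + f x u p
  else min (u - g x) (-detPlus X + f x u p)

/-- Upper envelope `F^*` of the generalized Dirichlet Monge–Ampère operator. -/
noncomputable def MAUpper {n : ℕ} (Ω : Set (EuclideanSpace ℝ (Fin n)))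
    (f : EuclideanSpace ℝ (Fin n) → ℝ → EuclideanSpace ℝ (Fin n) → ℝ)
    (g : EuclideanSpace ℝ (Fin n) → ℝ)
    (x : EuclideanSpace ℝ (Fin n)) (u : ℝ) (p : EuclideanSpace ℝ (Fin n))
    (X : Matrix (Fin n) (Fin n) ℝ) : ℝ :=
  if x ∈ Ω then -detPlus X + f x u p
  else max (u - g x) (-detPlus X + f x u p)

/-- Viscosity subsolution of the generalized Dirichlet problem on `closure Ω`. -/
def IsViscositySubsolution {n : ℕ} (Ω : Set (EuclideanSpace ℝ (Fin n)))
    (f : EuclideanSpace ℝ (Fin n) → ℝ → EuclideanSpace ℝ (Fin n) → ℝ)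
    (g : EuclideanSpace ℝ (Fin n) → ℝ)
    (v : EuclideanSpace ℝ (Fin n) → ℝ) : Prop :=
  UpperSemicontinuousOn v (closure Ω) ∧
  ∀ φ : EuclideanSpace ℝ (Fin n) → ℝ, ContDiff ℝ 2 φ →
    ∀ x₀ ∈ closure Ω, IsLocalMaxOn (fun x => v x - φ x) (closure Ω) x₀ →
      MALower Ω f g x₀ (v x₀) (gradient φ x₀) (hessianMatrix φ x₀) ≤ 0

/-- Viscosity supersolution of the generalized Dirichlet problem on `closure Ω`. -/
def IsViscositySupersolution {n : ℕ} (Ω : Set (EuclideanSpace ℝ (Fin n)))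
    (f : EuclideanSpace ℝ (Fin n) → ℝ → EuclideanSpace ℝ (Fin n) → ℝ)
    (g : EuclideanSpace ℝ (Fin n) → ℝ)
    (w : EuclideanSpace ℝ (Fin n) → ℝ) : Prop :=
  LowerSemicontinuousOn w (closure Ω) ∧
  ∀ φ : EuclideanSpace ℝ (Fin n) → ℝ, ContDiff ℝ 2 φ →
    ∀ x₀ ∈ closure Ω, IsLocalMinOn (fun x => w x - φ x) (closure Ω) x₀ →
      0 ≤ MAUpper Ω f g x₀ (w x₀) (gradient φ x₀) (hessianMatrix φ x₀)

/-- A bounded open convex set is uniformly convex if every supporting hyperplane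
separates quadratically. -/
def UniformlyConvexDomain {n : ℕ} (Ω : Set (EuclideanSpace ℝ (Fin n))) : Prop :=
  ∀ x₀ ∈ frontier Ω, ∀ ν : EuclideanSpace ℝ (Fin n), ‖ν‖ = 1 →
    (∀ x ∈ closure Ω, ⟪ν, x - x₀⟫ ≤ 0) →
    ∃ α > 0, ∀ x ∈ closure Ω, ⟪ν, x - x₀⟫ ≤ -α * ‖x - x₀‖ ^ 2

/-- The test function `K d - d²`, where `d x = -⟪ν, x - x₀⟫`. -/
noncomputable def normalTest {n : ℕ} (ν x₀ : EuclideanSpace ℝ (Fin n)) (K : ℝ)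
    (x : EuclideanSpace ℝ (Fin n)) : ℝ :=
  -K * ⟪ν, x - x₀⟫ - ⟪ν, x - x₀⟫ ^ 2

lemma normalTest_contDiff {n : ℕ} (ν x₀ : EuclideanSpace ℝ (Fin n)) (K : ℝ) :
    ContDiff ℝ 2 (normalTest ν x₀ K) := by
  have h : ContDiff ℝ 2 fun x => ⟪ν, x - x₀⟫ := contDiff_const.inner ℝ (contDiff_id.sub contDiff_const)
  exact (contDiff_const.mul h).sub (h.pow 2)

lemma hasFDerivAt_inner_sub {n : ℕ} (ν x₀ x : EuclideanSpace ℝ (Fin n)) :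
    HasFDerivAt (fun y => ⟪ν, y - x₀⟫) (innerSL ℝ ν) x :=
  (innerSL ℝ ν).hasFDerivAt.comp x ((hasFDerivAt_id x).sub_const x₀)

lemma normalTest_fderiv {n : ℕ} (ν x₀ : EuclideanSpace ℝ (Fin n)) (K : ℝ) :
    fderiv ℝ (normalTest ν x₀ K) = fun x => (-K - 2 * ⟪ν, x - x₀⟫) • innerSL ℝ ν := by
  funext x
  have h := hasFDerivAt_inner_sub ν x₀ x
  refine HasFDerivAt.fderiv (((h.const_mul (-K)).sub (h.pow 2)).congr_fderiv ?_)
  ext w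
  simp
  ring

lemma normalTest_hessianMatrix {n : ℕ} (ν x₀ x : EuclideanSpace ℝ (Fin n)) (K : ℝ)
    (i j : Fin n) : hessianMatrix (normalTest ν x₀ K) x i j = -2 * (ν i * ν j) := by
  have h := (((hasFDerivAt_inner_sub ν x₀ x).const_mul 2).const_sub (-K)).smul_const (innerSL ℝ ν)
  simp only [hessianMatrix, Matrix.of_apply, iteratedFDeriv_two_apply, normalTest_fderiv]
  rw [h.fderiv]
  simp [EuclideanSpace.inner_single_right]
  ring

/-- A diagonal Hessian entry `-2 νᵢ²` with `νᵢ ≠ 0` rules out positive semidefiniteness. -/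
lemma normalTest_detPlus {n : ℕ} (ν x₀ x : EuclideanSpace ℝ (Fin n)) (hν : ν ≠ 0) (K : ℝ) :
    detPlus (hessianMatrix (normalTest ν x₀ K) x) = -1 := by
  refine if_neg fun h => hν ?_
  ext i
  have h1 := h.diag_nonneg (i := i)
  rw [normalTest_hessianMatrix] at h1
  have : ν i = 0 := by nlinarith [mul_self_nonneg (ν i)]
  simpa using this

/-- A supporting hyperplane exists at every boundary point of an open convex set. -/
lemma exists_unit_normal {n : ℕ} {Ω : Set (EuclideanSpace ℝ (Fin n))}
    (hopen : IsOpen Ω) (hconv : Convex ℝ Ω) {x₀ : EuclideanSpace ℝ (Fin n)}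
    (hx₀ : x₀ ∈ frontier Ω) :
    ∃ ν : EuclideanSpace ℝ (Fin n), ‖ν‖ = 1 ∧ ∀ x ∈ closure Ω, ⟪ν, x - x₀⟫ ≤ 0 := by
  rw [hopen.frontier_eq] at hx₀
  obtain ⟨L, hL⟩ := geometric_hahn_banach_open_point hconv hopen hx₀.2
  obtain ⟨a, ha⟩ : Ω.Nonempty := closure_nonempty_iff.1 ⟨x₀, hx₀.1⟩
  set w := (InnerProductSpace.toDual ℝ (EuclideanSpace ℝ (Fin n))).symm L with hw
  have hwL : ∀ x, ⟪w, x⟫ = L x := fun x => InnerProductSpace.toDual_symm_apply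
  have hw0 : w ≠ 0 := by
    intro h
    have h1 := hL a ha
    rw [← hwL, ← hwL, h] at h1
    simp at h1
  refine ⟨‖w‖⁻¹ • w, norm_smul_inv_norm hw0, fun x hx => ?_⟩
  rw [real_inner_smul_left, inner_sub_right, hwL, hwL]
  have hle : L x ≤ L x₀ :=
    closure_minimal (fun y hy => (hL y hy).le) (isClosed_le L.continuous continuous_const) hx
  exact mul_nonpos_of_nonneg_of_nonpos (by positivity) (by linarith)

/-- **Behaviour of subsolutions at the boundary**: a viscosity subsolution of the
generalized Dirichlet problem lies below the boundary data on `∂Ω`. -/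
theorem subsolution_boundary_behaviour
    {n : ℕ}
    (Ω : Set (EuclideanSpace ℝ (Fin n)))
    (hΩ_open : IsOpen Ω) (hΩ_bdd : Bornology.IsBounded Ω)
    (hΩ_conv : Convex ℝ Ω) (hΩ_uc : UniformlyConvexDomain Ω)
    (f : EuclideanSpace ℝ (Fin n) → ℝ → EuclideanSpace ℝ (Fin n) → ℝ)
    (hf_cont : ContinuousOn
      (fun q : EuclideanSpace ℝ (Fin n) × ℝ × EuclideanSpace ℝ (Fin n) => f q.1 q.2.1 q.2.2)
      ((closure Ω) ×ˢ (Set.univ ×ˢ Set.univ)))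
    (hf_nonneg : ∀ x ∈ closure Ω, ∀ (u : ℝ) (p : EuclideanSpace ℝ (Fin n)), 0 ≤ f x u p)
    (g : EuclideanSpace ℝ (Fin n) → ℝ) (hg : ContinuousOn g (frontier Ω))
    (v : EuclideanSpace ℝ (Fin n) → ℝ)
    (hv_sub : IsViscositySubsolution Ω f g v) :
    ∀ x ∈ frontier Ω, v x ≤ g x := by
  intro x₀ hx₀
  obtain ⟨hv, hsub⟩ := hv_sub
  by_contra! hlt
  have hx₀c : x₀ ∈ closure Ω := frontier_subset_closure hx₀
  have hcpt : IsCompact (closure Ω) := hΩ_bdd.isCompact_closure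
  obtain ⟨ν, hν, hνle⟩ := exists_unit_normal hΩ_open hΩ_conv hx₀
  have hν0 : ν ≠ 0 := by
    rintro rfl
    simp at hν
  obtain ⟨α, hα, huc⟩ := hΩ_uc x₀ hx₀ ν hν hνle
  obtain ⟨r, hr, hgr⟩ : ∃ r > 0, ∀ y ∈ frontier Ω, dist y x₀ < r → g y < v x₀ := by
    have h1 := (hg x₀ hx₀).eventually (gt_mem_nhds hlt)
    obtain ⟨r, hr, h⟩ := Metric.mem_nhdsWithin_iff.1 h1
    exact ⟨r, hr, fun y hy hd => h ⟨hd, hy⟩⟩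
  obtain ⟨m, hm, hmax⟩ := hv.exists_isMaxOn ⟨x₀, hx₀c⟩ hcpt
  obtain ⟨D, hD⟩ := hcpt.exists_bound_of_continuousOn (f := fun x => x - x₀)
    (by fun_prop)
  -- With this `K`, `φ ≥ (K - D) d ≥ (K - D) α ‖x - x₀‖²` exceeds `sup v - v x₀` off the `r`-ball.
  set K := D + (v m - v x₀ + 1) / (α * r ^ 2) with hK
  set φ := normalTest ν x₀ K with hφ
  have hφc : ContDiff ℝ 2 φ := normalTest_contDiff ν x₀ K
  have hvφ : UpperSemicontinuousOn (fun x => v x - φ x) (closure Ω) := by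
    have h2 : UpperSemicontinuousOn (fun x => -φ x) (closure Ω) :=
      hφc.continuous.neg.continuousOn.upperSemicontinuousOn
    simpa [sub_eq_add_neg] using hv.add h2
  obtain ⟨y, hy, hymax⟩ := hvφ.exists_isMaxOn ⟨x₀, hx₀c⟩ hcpt
  have hvm : v x₀ ≤ v m := hmax hx₀c
  have hKD : 0 < (v m - v x₀ + 1) / (α * r ^ 2) := by
    have : 0 < v m - v x₀ + 1 := by linarith
    positivity
  have hφy : (v m - v x₀ + 1) / (α * r ^ 2) * (α * ‖y - x₀‖ ^ 2) ≤ φ y := by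
    have h1 := huc y hy
    have h2 : -⟪ν, y - x₀⟫ ≤ D := by
      have h3 := abs_real_inner_le_norm ν (y - x₀)
      rw [hν, one_mul] at h3
      exact (neg_le_abs _).trans (h3.trans (hD y hy))
    have h4 := hνle y hy
    simp only [hφ, normalTest]
    have h5 : (v m - v x₀ + 1) / (α * r ^ 2) = K - D := by rw [hK]; ring
    rw [h5] at hKD ⊢
    nlinarith [mul_le_mul_of_nonneg_left h1 hKD.le, mul_nonneg (neg_nonneg.2 h4) (sub_nonneg.2 h2)]
  have hφx₀ : φ x₀ = 0 := by simp [hφ, normalTest]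
  have hcmp : v x₀ - φ x₀ ≤ v y - φ y := hymax hx₀c
  have hvy : v y ≤ v m := hmax hy
  have hφy0 : 0 ≤ φ y := le_trans (by positivity) hφy
  have hdist : dist y x₀ < r := by
    by_contra! hge
    rw [dist_eq_norm] at hge
    have h1 : (v m - v x₀ + 1) / (α * r ^ 2) * (α * r ^ 2) ≤ φ y := le_trans (by gcongr) hφy
    rw [div_mul_cancel₀ _ (by positivity)] at h1
    linarith
  have hF := hsub φ hφc y hy hymax.localize
  have hfy := hf_nonneg y hy (v y) (gradient φ y)
  rw [MALower, normalTest_detPlus ν x₀ y hν0 K] at hF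
  split_ifs at hF with hyΩ
  · linarith
  · have hgy := hgr y (by rw [hΩ_open.frontier_eq]; exact ⟨hy, hyΩ⟩) hdist
    rcases min_le_iff.1 hF with h | h <;> linarith
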